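/- Let (X, 𝒜, μ) be a measure space with μ σ-finite, and let p, q : X → ℝ be measurable functions with p ≥ 0, q ≥ 0, ∫ p dμ = 1 and ∫ q dμ = 1. Suppose D : X → ℝ is measurable with 0 < D(x) < 1 for all x, the integral ∫ (p·log D + q·log(1−D)) dμ is finite, and it equals the optimal value ∫_{ {p+q>0} } (p·log(p/(p+q)) + q·log(q/(p+q))) dμ (assumed finite). Then D(x) = p(x)/(p(x)+q(x)) for μ-almost every x in the set {x : p(x)+q(x) > 0}. -/

import Mathlib

open MeasureTheory Real Set

lemma gan_aux (a d s : ℝ) (ha : 0 ≤ a) (hd : 0 < d) (hs : 0 < s) (hne : d ≠ a / s) :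
    a * Real.log d - a * Real.log (a / s) < s * d - a := by
  rcases ha.eq_or_lt with rfl | ha
  · simp only [zero_mul, sub_zero]
    positivity
  · have h1 : d / (a / s) ≠ 1 := by
      intro h
      rw [div_eq_one_iff_eq (by positivity)] at h
      exact hne h
    have h2 := Real.log_lt_sub_one_of_pos (by positivity : 0 < d / (a / s)) h1
    rw [Real.log_div hd.ne' (by positivity)] at h2
    have h3 := mul_lt_mul_of_pos_left h2 ha
    have h4 : a * (d / (a / s) - 1) = s * d - a := by
      field_simp
    linarith

lemma gan_aux2 (a b d : ℝ) (ha : 0 ≤ a) (hb : 0 ≤ b) (hd : 0 < d) (hd1 : d < 1)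
    (hs : 0 < a + b) (hne : d ≠ a / (a + b)) :
    a * Real.log d + b * Real.log (1 - d) <
      a * Real.log (a / (a + b)) + b * Real.log (b / (a + b)) := by
  have h1 := gan_aux a d (a + b) ha hd hs hne
  have h2 := gan_aux b (1 - d) (a + b) hb (by linarith) hs (by
    intro h
    apply hne
    have : a / (a + b) + b / (a + b) = 1 := by rw [← add_div, div_self hs.ne']
    linarith)
  nlinarith

/-- Equality case for the optimal GAN discriminator: if a discriminator `D : X → (0,1)`
attains the optimal (finite) value of the objective, then `D = p/(p+q)` μ-a.e. on the
set `{p+q > 0}`. -/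
theorem gan_optimal_discriminator_unique
    {X : Type*} [MeasurableSpace X] (μ : Measure X) [SigmaFinite μ]
    (p q : X → ℝ) (hpm : Measurable p) (hqm : Measurable q)
    (hp0 : ∀ x, 0 ≤ p x) (hq0 : ∀ x, 0 ≤ q x)
    (hp1 : ∫ x, p x ∂μ = 1) (hq1 : ∫ x, q x ∂μ = 1)
    (D : X → ℝ) (hDm : Measurable D) (hD : ∀ x, D x ∈ Set.Ioo (0:ℝ) 1)
    (hint : Integrable (fun x => p x * Real.log (D x) + q x * Real.log (1 - D x)) μ)
    (hintOpt : IntegrableOn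
      (fun x => p x * Real.log (p x / (p x + q x)) + q x * Real.log (q x / (p x + q x)))
      {x | 0 < p x + q x} μ)
    (heq : ∫ x, (p x * Real.log (D x) + q x * Real.log (1 - D x)) ∂μ
        = ∫ x in {x | 0 < p x + q x},
            (p x * Real.log (p x / (p x + q x)) + q x * Real.log (q x / (p x + q x))) ∂μ) :
    ∀ᵐ x ∂(μ.restrict {x | 0 < p x + q x}), D x = p x / (p x + q x) := by
  set S : Set X := {x | 0 < p x + q x} with hS
  have hSm : MeasurableSet S := measurableSet_lt measurable_const (hpm.add hqm)
  have hres : ∫ x in S, (p x * Real.log (D x) + q x * Real.log (1 - D x)) ∂μ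
      = ∫ x, (p x * Real.log (D x) + q x * Real.log (1 - D x)) ∂μ := by
    apply setIntegral_eq_integral_of_forall_compl_eq_zero
    intro x hx
    have hx' : p x + q x ≤ 0 := not_lt.mp hx
    have h1 : p x = 0 := by linarith [hp0 x, hq0 x]
    have h2 : q x = 0 := by linarith [hp0 x, hq0 x]
    simp [h1, h2]
  have hle : (fun x => p x * Real.log (D x) + q x * Real.log (1 - D x)) ≤ᵐ[μ.restrict S]
      (fun x => p x * Real.log (p x / (p x + q x)) + q x * Real.log (q x / (p x + q x))) := by
    filter_upwards [ae_restrict_mem hSm] with x hx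
    by_cases h : D x = p x / (p x + q x)
    · have h2 : 1 - D x = q x / (p x + q x) := by
        have : p x / (p x + q x) + q x / (p x + q x) = 1 := by
          rw [← add_div, div_self (ne_of_gt hx)]
        linarith
      rw [h2, h]
    · exact (gan_aux2 _ _ _ (hp0 x) (hq0 x) (hD x).1 (hD x).2 hx h).le
  have hae := (integral_eq_iff_of_ae_le hint.integrableOn hintOpt hle).mp (hres.trans heq)
  filter_upwards [hae, ae_restrict_mem hSm] with x hx hxS
  by_contra h
  exact (gan_aux2 _ _ _ (hp0 x) (hq0 x) (hD x).1 (hD x).2 hxS h).ne hx
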